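/- Let D be a finite group with an abelian subgroup H of index at most 2 such that every element of D not in H has order 2 and acts on H by inversion. Then every subgroup of D is generated by at most 3 elements, provided H has rank at most 2. -/

import Mathlib

theorem comm_zpow_aux {D : Type*} [Group D] {a b : D} (h : Commute a b) (m n p q : ℤ) :
    (a ^ m * b ^ n) * (a ^ p * b ^ q) = a ^ (m + p) * b ^ (n + q) := by
  have h1 : b ^ n * a ^ p = a ^ p * b ^ n := ((h.zpow_zpow p n).eq).symm
  rw [zpow_add, zpow_add, mul_assoc, ← mul_assoc (b ^ n), h1]
  simp only [mul_assoc]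

theorem comm_zpow_inv_aux {D : Type*} [Group D] {a b : D} (h : Commute a b) (m n : ℤ) :
    (a ^ m * b ^ n)⁻¹ = a ^ (-m) * b ^ (-n) := by
  rw [inv_eq_iff_mul_eq_one, comm_zpow_aux h]
  simp

theorem comm_zpow_zpow_aux {D : Type*} [Group D] {a b : D} (h : Commute a b) (m n k : ℤ) :
    (a ^ m * b ^ n) ^ k = a ^ (m * k) * b ^ (n * k) := by
  rw [(h.zpow_zpow m n).mul_zpow, zpow_mul, zpow_mul]

theorem two_gen_aux {D : Type*} [Group D] {a b : D} (h : Commute a b) (L : Subgroup D)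
    (hL : L ≤ Subgroup.closure {a, b}) : ∃ x y : D, Subgroup.closure {x, y} = L := by
  have hrep : ∀ g ∈ L, ∃ m n : ℤ, a ^ m * b ^ n = g := by
    intro g hg
    replace hg := hL hg
    induction hg using Subgroup.closure_induction with
    | mem x hx =>
      rcases hx with rfl | hx
      · exact ⟨1, 0, by simp⟩
      · rw [Set.mem_singleton_iff] at hx
        exact ⟨0, 1, by simp [hx]⟩
    | one => exact ⟨0, 0, by simp⟩
    | mul x y _ _ hx hy =>
      obtain ⟨m, n, rfl⟩ := hx
      obtain ⟨p, q, rfl⟩ := hy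
      exact ⟨_, _, (comm_zpow_aux h m n p q).symm⟩
    | inv x _ hx =>
      obtain ⟨m, n, rfl⟩ := hx
      exact ⟨_, _, (comm_zpow_inv_aux h m n).symm⟩
  let J : AddSubgroup ℤ :=
    { carrier := {n | ∃ m : ℤ, a ^ m * b ^ n ∈ L}
      zero_mem' := ⟨0, by simp⟩
      add_mem' := by
        rintro n q ⟨m, hm⟩ ⟨p, hp⟩
        exact ⟨m + p, by rw [← comm_zpow_aux h]; exact L.mul_mem hm hp⟩
      neg_mem' := by
        rintro n ⟨m, hm⟩
        exact ⟨-m, by rw [← comm_zpow_inv_aux h]; exact L.inv_mem hm⟩ }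
  let I : AddSubgroup ℤ :=
    { carrier := {m | a ^ m ∈ L}
      zero_mem' := by simp
      add_mem' := by
        intro m p hm hp
        simp only [Set.mem_ofPred_eq] at *
        rw [zpow_add]
        exact L.mul_mem hm hp
      neg_mem' := by
        intro m hm
        simp only [Set.mem_ofPred_eq] at *
        rw [zpow_neg]
        exact L.inv_mem hm }
  obtain ⟨n0, hJ⟩ := Int.subgroup_cyclic J
  obtain ⟨m1, hI⟩ := Int.subgroup_cyclic I
  have hn0 : n0 ∈ J := by rw [hJ]; exact AddSubgroup.subset_closure rfl
  have hm1 : a ^ m1 ∈ L := by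
    have : m1 ∈ I := by rw [hI]; exact AddSubgroup.subset_closure rfl
    exact this
  obtain ⟨m0, hm0⟩ := hn0
  refine ⟨a ^ m0 * b ^ n0, a ^ m1, le_antisymm ?_ ?_⟩
  · rw [Subgroup.closure_le]
    rintro x (rfl | hx)
    · exact hm0
    · rw [Set.mem_singleton_iff] at hx
      rw [hx]; exact hm1
  · intro g hg
    obtain ⟨m, n, rfl⟩ := hrep g hg
    have hn : n ∈ J := ⟨m, hg⟩
    rw [hJ, AddSubgroup.mem_closure_singleton] at hn
    obtain ⟨k, rfl⟩ := hn
    have e1 : (a ^ m * b ^ (k • n0)) * (a ^ m0 * b ^ n0) ^ (-k) = a ^ (m + m0 * (-k)) := by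
      rw [comm_zpow_zpow_aux h, comm_zpow_aux h]
      have : k • n0 + n0 * -k = 0 := by rw [smul_eq_mul]; ring
      rw [this, zpow_zero, mul_one]
    have hm : m + m0 * (-k) ∈ I := by
      change a ^ _ ∈ L
      rw [← e1]
      exact L.mul_mem hg (L.zpow_mem hm0 _)
    rw [hI, AddSubgroup.mem_closure_singleton] at hm
    obtain ⟨l, hl⟩ := hm
    have e2 : a ^ m * b ^ (k • n0) = (a ^ m1) ^ l * (a ^ m0 * b ^ n0) ^ k := by
      rw [← zpow_mul, mul_comm m1 l, ← smul_eq_mul (a := l), hl, ← e1, zpow_neg, inv_mul_cancel_right]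
    rw [e2]
    exact mul_mem (zpow_mem (Subgroup.subset_closure (by simp)) _)
      (zpow_mem (Subgroup.subset_closure (by simp)) _)

theorem stmt1 {D : Type*} [Group D] [Fintype D] (H : Subgroup D)
    (habel : ∀ x y : D, x ∈ H → y ∈ H → x * y = y * x)
    (hrank : ∃ a b : D, Subgroup.closure {a, b} = H)
    (hindex : H.index ≤ 2)
    (hdih : ∀ d : D, d ∉ H → d ^ 2 = 1 ∧ ∀ h ∈ H, d * h * d⁻¹ = h⁻¹) :
    ∀ K : Subgroup D, ∃ s : Finset D, s.card ≤ 3 ∧ Subgroup.closure (s : Set D) = K := by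
  classical
  intro K
  obtain ⟨a, b, hab⟩ := hrank
  have hc : Commute a b := habel a b (hab ▸ Subgroup.subset_closure (by simp))
    (hab ▸ Subgroup.subset_closure (by simp))
  obtain ⟨x, y, hxy⟩ := two_gen_aux hc (K ⊓ H) (by rw [hab]; exact inf_le_right)
  by_cases hK : K ≤ H
  · refine ⟨{x, y}, Finset.card_le_two.trans (by norm_num), ?_⟩
    rw [Finset.coe_pair, hxy, inf_eq_left.2 hK]
  · obtain ⟨d, hdK, hdH⟩ := SetLike.not_le_iff_exists.1 hK
    have h0 : H.index ≠ 0 := Subgroup.index_ne_zero_of_finite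
    have h1 : H.index ≠ 1 := by
      intro h
      rw [Subgroup.index_eq_one] at h
      exact hdH (h ▸ Subgroup.mem_top d)
    have h2 : H.index = 2 := by omega
    refine ⟨{d, x, y}, Finset.card_le_three, ?_⟩
    have hle : K ⊓ H ≤ Subgroup.closure (({d, x, y} : Finset D) : Set D) := by
      rw [← hxy]
      apply Subgroup.closure_mono
      intro z hz
      simp only [Finset.coe_insert, Finset.coe_singleton]
      exact Or.inr hz
    have hd : d ∈ Subgroup.closure (({d, x, y} : Finset D) : Set D) :=
      Subgroup.subset_closure (by simp)
    have hx : x ∈ K ⊓ H := hxy ▸ Subgroup.subset_closure (by simp)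
    have hy : y ∈ K ⊓ H := hxy ▸ Subgroup.subset_closure (by simp)
    apply le_antisymm
    · rw [Subgroup.closure_le]
      intro z hz
      simp only [Finset.coe_insert, Finset.coe_singleton, Set.mem_insert_iff,
        Set.mem_singleton_iff] at hz
      rcases hz with rfl | rfl | rfl
      · exact hdK
      · exact hx.1
      · exact hy.1
    · intro k hk
      by_cases hkH : k ∈ H
      · exact hle ⟨hk, hkH⟩
      · have hkd : k * d ∈ H := by
          rw [Subgroup.mul_mem_iff_of_index_two h2]
          exact iff_of_false hkH hdH
        have := mul_mem (hle ⟨K.mul_mem hk hdK, hkd⟩) (inv_mem hd)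
        rwa [mul_inv_cancel_right] at this
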